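/- Let E ⊂ ℂ^N be a nonempty compact determining set and let q be an E-admissible norm on ℙ(ℂ^N). Then the limit lim_{k→∞} m_k(q)/k exists and equals m(E); in particular m*(q) = m(E) and m(E) ≤ m(q). -/

import Mathlib

open MvPolynomial Filter
open scoped ENNReal

/-- The partial-derivative operator `D^α = ∂^{|α|}/∂x₁^{α₁}⋯∂x_N^{α_N}` on
polynomials in `N` variables. -/
noncomputable def mvDeriv {N : ℕ} (α : Fin N → ℕ) (P : MvPolynomial (Fin N) ℂ) :
    MvPolynomial (Fin N) ℂ :=
  (List.ofFn fun j : Fin N =>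
      (fun Q : MvPolynomial (Fin N) ℂ => MvPolynomial.pderiv j Q)^[α j]).foldl
    (fun Q f => f Q) P

/-- `q` is a norm on the complex vector space `ℙ(ℂ^N)` of polynomials. -/
structure IsPolyNorm {N : ℕ} (q : MvPolynomial (Fin N) ℂ → ℝ) : Prop where
  nonneg : ∀ P, 0 ≤ q P
  definite : ∀ P, q P = 0 → P = 0
  triangle : ∀ P Q, q (P + Q) ≤ q P + q Q
  homog : ∀ (c : ℂ) (P), q (c • P) = ‖c‖ * q P

/-- The Markov exponent `m(α, q) ∈ [0,∞]`: the infimum of the set of `s > 0` such that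
`q(D^α P) ≤ M (deg P)^s q(P)` holds for some `M > 0` and all `P` with `deg P ≥ 1`
(`sInf ∅ = ∞` in `ℝ≥0∞`). -/
noncomputable def mExp {N : ℕ} (q : MvPolynomial (Fin N) ℂ → ℝ) (α : Fin N → ℕ) : ℝ≥0∞ :=
  sInf (ENNReal.ofReal '' {s : ℝ | 0 < s ∧ ∃ M : ℝ, 0 < M ∧
    ∀ P : MvPolynomial (Fin N) ℂ, 1 ≤ P.totalDegree →
      q (mvDeriv α P) ≤ M * (P.totalDegree : ℝ) ^ s * q P})

/-- `m_k(q) = max {m(α,q) : |α| = k}`. -/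
noncomputable def mkExp {N : ℕ} (q : MvPolynomial (Fin N) ℂ → ℝ) (k : ℕ) : ℝ≥0∞ :=
  ⨆ α ∈ {α : Fin N → ℕ | ∑ j, α j = k}, mExp q α

/-- The asymptotic Markov exponent `m*(q) = limsup_k m_k(q)/k`. -/
noncomputable def mStar {N : ℕ} (q : MvPolynomial (Fin N) ℂ → ℝ) : ℝ≥0∞ :=
  Filter.atTop.limsup fun k : ℕ => mkExp q k / (k : ℝ≥0∞)

/-- The supremum norm `‖P‖_E = sup_{z ∈ E} |P(z)|` on polynomials. -/
noncomputable def supNorm {N : ℕ} (E : Set (Fin N → ℂ)) (P : MvPolynomial (Fin N) ℂ) : ℝ :=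
  ⨆ z : E, ‖MvPolynomial.eval (z : Fin N → ℂ) P‖

/-!
Admissibility changes each exponent `m_k` by at most the constant `a + b`, which disappears after
division by `k`, so it is enough to show `m_k(E) = k m(E)`. Composing Markov inequalities gives
`m_k ≤ k m_1` for every norm. For the reverse inequality fix `z ∈ E` and put `W = P - P(z)`:
since `W` vanishes at `z`, only one term of the Leibniz expansion survives there and
`∂ⱼ^k (W^k) (z) = k! (∂ⱼ P (z))^k`. A Markov inequality of exponent `s` for `∂ⱼ^k`, applied to
`W^k`, therefore gives one of exponent `s / k` for `∂ⱼ` after taking `k`-th roots.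
-/

/-! ### The operators `D^α` -/

section Derivatives

variable {σ R : Type*}

theorem commute_pderiv [CommRing R] (i j : σ) :
    Function.Commute (pderiv (R := R) i) (pderiv j) := by
  classical
  have hbracket : ⁅pderiv (R := R) i, pderiv j⁆ = 0 := derivation_ext fun k => by
    rw [Derivation.commutator_apply, pderiv_X, pderiv_X]
    simp only [Pi.single_apply]
    split_ifs <;> simp
  intro P
  rw [← sub_eq_zero, ← Derivation.commutator_apply, hbracket, Derivation.zero_apply]

theorem totalDegree_pderiv_le [CommSemiring R] (j : σ) (P : MvPolynomial σ R) :
    (pderiv j P).totalDegree ≤ P.totalDegree := by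
  classical
  conv_lhs => rw [P.as_sum, map_sum]
  refine (totalDegree_finsetSum _ _).trans (Finset.sup_le fun m hm => ?_)
  rw [pderiv_monomial]
  calc totalDegree _ ≤ (m - Finsupp.single j 1).degree := totalDegree_monomial_le _ _
    _ ≤ m.degree := Finsupp.degree_mono tsub_le_self
    _ ≤ P.totalDegree := le_totalDegree hm

theorem dvd_iterate_derivation_pow_mul_sub {A : Type*} [CommSemiring R] [CommRing A] [Algebra R A]
    (D : Derivation R A A) (w x : A) (m : ℕ) :
    w ∣ D^[m] (w ^ m * x) - m.factorial * D w ^ m * x := by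
  induction m generalizing x with
  | zero => simp
  | succ m ih =>
    have hD : D (w ^ (m + 1) * x) = w ^ m * ((m + 1 : ℕ) * D w * x + w * D x) := by
      rw [Derivation.leibniz, Derivation.leibniz_pow]
      simp only [smul_eq_mul, nsmul_eq_mul, Nat.add_sub_cancel]
      ring
    rw [Function.iterate_succ_apply, hD]
    convert (ih ((m + 1 : ℕ) * D w * x + w * D x)).add
      (Dvd.intro (m.factorial * D w ^ m * D x) rfl) using 1
    rw [Nat.factorial_succ]
    push_cast
    ring

theorem eval_iterate_pderiv_pow [CommRing R] (j : σ) {W : MvPolynomial σ R} {z : σ → R}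
    (hW : eval z W = 0) (m : ℕ) :
    eval z ((pderiv j)^[m] (W ^ m)) = m.factorial * eval z (pderiv j W) ^ m := by
  have hdvd := map_dvd (eval z) (dvd_iterate_derivation_pow_mul_sub (pderiv j) W 1 m)
  rw [hW, zero_dvd_iff, map_sub, sub_eq_zero, mul_one, mul_one] at hdvd
  simpa only [map_mul, map_natCast, map_pow] using hdvd

end Derivatives

section FoldlIterate

variable {ι X : Type*} {f : ι → X → X}

theorem foldl_iterate_add (hf : ∀ i j, Function.Commute (f i) (f j)) (α β : ι → ℕ) (L : List ι)
    (x : X) :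
    L.foldl (fun y i => (f i)^[(α + β) i] y) x =
      L.foldl (fun y i => (f i)^[α i] y) (L.foldl (fun y i => (f i)^[β i] y) x) := by
  induction L generalizing x with
  | nil => rfl
  | cons i L ih =>
    simp only [List.foldl_cons]
    rw [ih, Pi.add_apply, Function.iterate_add_apply]
    congr 1
    exact List.foldl_hom _ fun y j => ((hf j i).iterate_iterate (β j) (α i)) y

theorem foldl_iterate_single [DecidableEq ι] (f : ι → X → X) (j : ι) (k : ℕ) (L : List ι)
    (x : X) :
    L.foldl (fun y i => (f i)^[(Pi.single j k : ι → ℕ) i] y) x = (f j)^[k * L.count j] x := by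
  induction L generalizing x with
  | nil => rfl
  | cons i L ih =>
    rw [List.foldl_cons, ih]
    rcases eq_or_ne i j with rfl | hij
    · rw [Pi.single_eq_same, ← Function.iterate_add_apply, List.count_cons_self, Nat.mul_succ]
    · rw [Pi.single_eq_of_ne hij, List.count_cons_of_ne hij, Function.iterate_zero_apply]

end FoldlIterate

section MvDeriv

variable {N : ℕ}

theorem mvDeriv_eq_foldl (α : Fin N → ℕ) (P : MvPolynomial (Fin N) ℂ) :
    mvDeriv α P = (List.finRange N).foldl (fun Q j => (pderiv j)^[α j] Q) P := by
  rw [mvDeriv, List.ofFn_eq_map, List.foldl_map]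

theorem mvDeriv_add (α β : Fin N → ℕ) (P : MvPolynomial (Fin N) ℂ) :
    mvDeriv (α + β) P = mvDeriv α (mvDeriv β P) := by
  simp only [mvDeriv_eq_foldl]
  exact foldl_iterate_add commute_pderiv α β _ P

theorem mvDeriv_single (j : Fin N) (k : ℕ) (P : MvPolynomial (Fin N) ℂ) :
    mvDeriv (Pi.single j k) P = (pderiv j)^[k] P := by
  rw [mvDeriv_eq_foldl, foldl_iterate_single, List.count_eq_one_of_mem (List.nodup_finRange N)
    (List.mem_finRange j), mul_one]

theorem mvDeriv_single_one (j : Fin N) (P : MvPolynomial (Fin N) ℂ) :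
    mvDeriv (Pi.single j 1) P = pderiv j P :=
  mvDeriv_single j 1 P

theorem mvDeriv_zero (P : MvPolynomial (Fin N) ℂ) : mvDeriv 0 P = P := by
  rw [mvDeriv_eq_foldl]
  exact List.foldl_fixed _

theorem mvDeriv_map_zero (α : Fin N → ℕ) : mvDeriv α (0 : MvPolynomial (Fin N) ℂ) = 0 := by
  rw [mvDeriv_eq_foldl]
  exact List.foldl_fixed' (fun j => Function.iterate_fixed (map_zero (pderiv j)) (α j)) _

theorem exists_eq_add_single_of_ne_zero {ι : Type*} [DecidableEq ι] {α : ι → ℕ} (hα : α ≠ 0) :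
    ∃ β : ι → ℕ, ∃ j, α = β + Pi.single j 1 := by
  obtain ⟨j, hj⟩ := Function.ne_iff.mp hα
  refine ⟨α - Pi.single j 1, j, (tsub_add_cancel_of_le ?_).symm⟩
  intro i
  rcases eq_or_ne i j with rfl | hij
  · simpa only [Pi.single_eq_same] using Nat.one_le_iff_ne_zero.mpr hj
  · simp only [Pi.single_eq_of_ne hij, zero_le]

theorem exists_eq_add_single_of_sum_eq_succ {ι : Type*} [Fintype ι] [DecidableEq ι] {α : ι → ℕ}
    {k : ℕ} (hα : ∑ i, α i = k + 1) :
    ∃ β : ι → ℕ, ∃ j, ∑ i, β i = k ∧ α = β + Pi.single j 1 := by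
  have hα0 : α ≠ 0 := by
    rintro rfl
    simp at hα
  obtain ⟨β, j, rfl⟩ := exists_eq_add_single_of_ne_zero hα0
  exact ⟨β, j, by simpa [Finset.sum_add_distrib] using hα, rfl⟩

theorem mvDeriv_C_of_ne_zero {α : Fin N → ℕ} (hα : α ≠ 0) (c : ℂ) :
    mvDeriv α (C c : MvPolynomial (Fin N) ℂ) = 0 := by
  obtain ⟨β, j, rfl⟩ := exists_eq_add_single_of_ne_zero hα
  rw [mvDeriv_add, mvDeriv_single_one, pderiv_C, mvDeriv_map_zero]

theorem totalDegree_mvDeriv_le (α : Fin N → ℕ) (P : MvPolynomial (Fin N) ℂ) :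
    (mvDeriv α P).totalDegree ≤ P.totalDegree := by
  rw [mvDeriv_eq_foldl]
  refine List.foldlRecOn (motive := fun Q : MvPolynomial (Fin N) ℂ =>
    Q.totalDegree ≤ P.totalDegree) _ _ le_rfl fun Q hQ j _ => ?_
  exact Function.Iterate.rec (fun R : MvPolynomial (Fin N) ℂ => R.totalDegree ≤ P.totalDegree) hQ
    (fun R hR => (totalDegree_pderiv_le j R).trans hR) (α j)

end MvDeriv

/-! ### Inequalities up to powers of the degree -/

section DegreeDominated

variable {σ R : Type*} [CommSemiring R]

/-- The total degree, replaced by `1` for constants, so that a bound by a power of the degree makes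
sense for every polynomial. -/
noncomputable def posDegree (P : MvPolynomial σ R) : ℝ :=
  max 1 P.totalDegree

theorem posDegree_of_one_le_totalDegree {P : MvPolynomial σ R} (hP : 1 ≤ P.totalDegree) :
    posDegree P = P.totalDegree :=
  max_eq_right (mod_cast hP)

theorem posDegree_C (c : R) : posDegree (C c : MvPolynomial σ R) = 1 := by
  simp only [posDegree, totalDegree_C, Nat.cast_zero, max_eq_left zero_le_one]

theorem one_le_posDegree (P : MvPolynomial σ R) : 1 ≤ posDegree P :=
  le_max_left _ _

theorem posDegree_pos (P : MvPolynomial σ R) : 0 < posDegree P :=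
  one_pos.trans_le (one_le_posDegree P)

theorem posDegree_le_posDegree {P Q : MvPolynomial σ R} (h : P.totalDegree ≤ Q.totalDegree) :
    posDegree P ≤ posDegree Q :=
  max_le_max le_rfl (mod_cast h)

theorem posDegree_pow_le (P : MvPolynomial σ R) {k : ℕ} (hk : 1 ≤ k) :
    posDegree (P ^ k) ≤ k * posDegree P := by
  refine max_le (one_le_mul_of_one_le_of_one_le (mod_cast hk) (one_le_posDegree P)) ?_
  calc ((P ^ k).totalDegree : ℝ) ≤ k * P.totalDegree := mod_cast totalDegree_pow P k
    _ ≤ k * posDegree P := by gcongr; exact le_max_right _ _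

/-- `q` is bounded by `r` up to a factor `O(deg ^ s)`. A norm `q` is `E`-admissible when it and the
supremum norm of `E` bound each other in this sense. -/
def DegreeDominated (s : ℝ) (q r : MvPolynomial σ R → ℝ) : Prop :=
  ∃ A, 0 < A ∧ ∀ P, q P ≤ A * posDegree P ^ s * r P

variable {p q r : MvPolynomial σ R → ℝ} {s t : ℝ}

theorem degreeDominated_iff (hr : ∀ P, 0 ≤ r P) {K : ℝ} (hK : ∀ c, q (C c) ≤ K * r (C c)) :
    DegreeDominated s q r ↔ ∃ A, 0 < A ∧ ∀ P : MvPolynomial σ R, 1 ≤ P.totalDegree →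
      q P ≤ A * (P.totalDegree : ℝ) ^ s * r P := by
  constructor
  · rintro ⟨A, hA, h⟩
    exact ⟨A, hA, fun P hP => posDegree_of_one_le_totalDegree hP ▸ h P⟩
  · rintro ⟨A, hA, h⟩
    refine ⟨max A K, lt_max_of_lt_left hA, fun P => ?_⟩
    rcases Nat.eq_zero_or_pos P.totalDegree with hP | hP
    · rw [totalDegree_eq_zero_iff_eq_C.mp hP, posDegree_C, Real.one_rpow, mul_one]
      exact (hK _).trans (mul_le_mul_of_nonneg_right (le_max_right A K) (hr _))
    · rw [posDegree_of_one_le_totalDegree hP]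
      refine (h P hP).trans ?_
      have := hr P
      gcongr
      exact le_max_left A K

theorem DegreeDominated.trans (hpq : DegreeDominated s p q) (hqr : DegreeDominated t q r) :
    DegreeDominated (s + t) p r := by
  obtain ⟨A, hA, hpq⟩ := hpq
  obtain ⟨B, hB, hqr⟩ := hqr
  refine ⟨A * B, mul_pos hA hB, fun P => ?_⟩
  have hP := posDegree_pos P
  calc p P ≤ A * posDegree P ^ s * q P := hpq P
    _ ≤ A * posDegree P ^ s * (B * posDegree P ^ t * r P) := by gcongr; exact hqr P
    _ = A * B * posDegree P ^ (s + t) * r P := by rw [Real.rpow_add hP]; ring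

theorem DegreeDominated.comp (hqr : DegreeDominated s q r) (hs : 0 ≤ s) (hr : ∀ P, 0 ≤ r P)
    {T : MvPolynomial σ R → MvPolynomial σ R} (hT : ∀ P, (T P).totalDegree ≤ P.totalDegree) :
    DegreeDominated s (fun P => q (T P)) (fun P => r (T P)) := by
  obtain ⟨A, hA, hqr⟩ := hqr
  refine ⟨A, hA, fun P => (hqr (T P)).trans ?_⟩
  have := posDegree_pos (T P)
  have := posDegree_le_posDegree (hT P)
  have := hr (T P)
  gcongr

theorem DegreeDominated.nonneg (hqr : DegreeDominated s q r) (hq : ∀ P, 0 ≤ q P)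
    (P : MvPolynomial σ R) : 0 ≤ r P := by
  obtain ⟨A, hA, hqr⟩ := hqr
  have hpos : 0 < A * posDegree P ^ s := mul_pos hA (Real.rpow_pos_of_pos (posDegree_pos P) s)
  exact (mul_nonneg_iff_of_pos_left hpos).mp ((hq P).trans (hqr P))

theorem DegreeDominated.eq_zero (hqr : DegreeDominated s q r) (hq : ∀ P, 0 ≤ q P)
    {P : MvPolynomial σ R} (hP : r P = 0) : q P = 0 := by
  obtain ⟨A, -, hqr⟩ := hqr
  exact le_antisymm ((hqr P).trans_eq (by rw [hP, mul_zero])) (hq P)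

end DegreeDominated

/-! ### Markov exponents -/

section MarkovExponents

variable {N : ℕ} {q r : MvPolynomial (Fin N) ℂ → ℝ} {α β : Fin N → ℕ} {s t : ℝ}

/-- The Markov inequality with exponent `s` for `D^α` and `q`, constants included. -/
def HasMarkovBound (q : MvPolynomial (Fin N) ℂ → ℝ) (α : Fin N → ℕ) (s : ℝ) : Prop :=
  DegreeDominated s (fun P => q (mvDeriv α P)) q

theorem hasMarkovBound_iff (hq : ∀ P, 0 ≤ q P) (hq0 : q 0 = 0) :
    HasMarkovBound q α s ↔ ∃ M, 0 < M ∧ ∀ P : MvPolynomial (Fin N) ℂ, 1 ≤ P.totalDegree →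
      q (mvDeriv α P) ≤ M * (P.totalDegree : ℝ) ^ s * q P := by
  refine degreeDominated_iff (K := 1) hq fun c => ?_
  rw [one_mul]
  rcases eq_or_ne α 0 with rfl | hα
  · rw [mvDeriv_zero]
  · rw [mvDeriv_C_of_ne_zero hα, hq0]
    exact hq (C c)

theorem mExp_eq_iInf (hq : ∀ P, 0 ≤ q P) (hq0 : q 0 = 0) (α : Fin N → ℕ) :
    mExp q α = ⨅ s, ⨅ _ : 0 < s ∧ HasMarkovBound q α s, ENNReal.ofReal s := by
  simp only [mExp, sInf_image, hasMarkovBound_iff hq hq0, Set.mem_ofPred_eq]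

theorem HasMarkovBound.add (hα : HasMarkovBound q α s) (hβ : HasMarkovBound q β t)
    (hq : ∀ P, 0 ≤ q P) (hs : 0 ≤ s) : HasMarkovBound q (α + β) (s + t) := by
  simpa only [HasMarkovBound, mvDeriv_add] using
    (hα.comp hs hq (totalDegree_mvDeriv_le β)).trans hβ

theorem mExp_add_le (hq : ∀ P, 0 ≤ q P) (hq0 : q 0 = 0) (α β : Fin N → ℕ) :
    mExp q (α + β) ≤ mExp q α + mExp q β := by
  simp only [mExp_eq_iInf hq hq0]
  refine ENNReal.le_iInf₂_add_iInf₂ fun s hs t ht => ?_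
  rw [← ENNReal.ofReal_add hs.1.le ht.1.le]
  exact iInf₂_le (s + t) ⟨add_pos hs.1 ht.1, hs.2.add ht.2 hq hs.1.le⟩

theorem mExp_le_mkExp (q : MvPolynomial (Fin N) ℂ → ℝ) (α : Fin N → ℕ) :
    mExp q α ≤ mkExp q (∑ j, α j) :=
  le_iSup₂ (f := fun β (_ : ∑ j, β j = ∑ j, α j) => mExp q β) α rfl

theorem mkExp_succ_le (hq : ∀ P, 0 ≤ q P) (hq0 : q 0 = 0) (k : ℕ) :
    mkExp q (k + 1) ≤ mkExp q k + mkExp q 1 := by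
  refine iSup₂_le fun α (hα : ∑ j, α j = k + 1) => ?_
  obtain ⟨β, j, hβ, rfl⟩ := exists_eq_add_single_of_sum_eq_succ hα
  calc mExp q (β + Pi.single j 1) ≤ mExp q β + mExp q (Pi.single j 1) := mExp_add_le hq hq0 _ _
    _ ≤ mkExp q k + mkExp q 1 := by
      gcongr
      · exact hβ ▸ mExp_le_mkExp q β
      · simpa using mExp_le_mkExp q (Pi.single j 1)

theorem mkExp_le_natCast_mul (hq : ∀ P, 0 ≤ q P) (hq0 : q 0 = 0) {k : ℕ} (hk : 1 ≤ k) :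
    mkExp q k ≤ k * mkExp q 1 := by
  induction k, hk using Nat.le_induction with
  | base => rw [Nat.cast_one, one_mul]
  | succ k _ ih =>
    rw [Nat.cast_succ, add_one_mul]
    exact (mkExp_succ_le hq hq0 k).trans (by gcongr)

theorem mkExp_one (q : MvPolynomial (Fin N) ℂ → ℝ) :
    mkExp q 1 = ⨆ j, mExp q (Pi.single j 1) := by
  refine le_antisymm (iSup₂_le fun α (hα : ∑ j, α j = 1) => ?_) (iSup_le fun j => ?_)
  · obtain ⟨β, j, hβ, rfl⟩ := exists_eq_add_single_of_sum_eq_succ hα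
    rw [show β = 0 by simpa [funext_iff] using hβ, zero_add]
    exact le_iSup (fun i => mExp q (Pi.single i 1)) j
  · simpa using mExp_le_mkExp q (Pi.single j 1)

theorem mExp_le_mExp_add {a b : ℝ} (hq : ∀ P, 0 ≤ q P) (hq0 : q 0 = 0) (ha : 0 ≤ a) (hb : 0 ≤ b)
    (hqr : DegreeDominated a q r) (hrq : DegreeDominated b r q) (α : Fin N → ℕ) :
    mExp r α ≤ mExp q α + ENNReal.ofReal (a + b) := by
  have hr := hqr.nonneg hq
  have hr0 : r 0 = 0 := hrq.eq_zero hr hq0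
  rw [mExp_eq_iInf hq hq0, mExp_eq_iInf hr hr0]
  simp only [ENNReal.iInf_add]
  refine le_iInf₂ fun s ⟨hs, hbound⟩ => ?_
  rw [← ENNReal.ofReal_add hs.le (add_nonneg ha hb)]
  refine iInf₂_le (s + (a + b)) ⟨by positivity, ?_⟩
  have hchain := ((hrq.comp hb hq (totalDegree_mvDeriv_le α)).trans hbound).trans hqr
  rwa [show b + s + a = s + (a + b) by ring] at hchain

theorem mkExp_le_mkExp_add {a b : ℝ} (hq : ∀ P, 0 ≤ q P) (hq0 : q 0 = 0) (ha : 0 ≤ a) (hb : 0 ≤ b)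
    (hqr : DegreeDominated a q r) (hrq : DegreeDominated b r q) (k : ℕ) :
    mkExp r k ≤ mkExp q k + ENNReal.ofReal (a + b) :=
  iSup₂_le fun α (hα : ∑ j, α j = k) =>
    (mExp_le_mExp_add hq hq0 ha hb hqr hrq α).trans <| by
      gcongr
      exact hα ▸ mExp_le_mkExp q α

end MarkovExponents

/-! ### The supremum norm -/

section SupNorm

variable {N : ℕ} {E : Set (Fin N → ℂ)} {z : Fin N → ℂ}

theorem bddAbove_range_norm_eval (hE : Bornology.IsBounded E) (P : MvPolynomial (Fin N) ℂ) :
    BddAbove (Set.range fun z : E => ‖eval (z : Fin N → ℂ) P‖) := by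
  have himage : BddAbove ((fun z => ‖eval z P‖) '' closure E) :=
    hE.isCompact_closure.bddAbove_image (continuous_eval P).norm.continuousOn
  rw [← Set.image_eq_range (fun z => ‖eval z P‖)]
  exact himage.mono (Set.image_mono subset_closure)

theorem norm_eval_le_supNorm (hE : Bornology.IsBounded E) (P : MvPolynomial (Fin N) ℂ)
    (hz : z ∈ E) : ‖eval z P‖ ≤ supNorm E P :=
  le_ciSup (bddAbove_range_norm_eval hE P) (⟨z, hz⟩ : E)

theorem supNorm_le (hne : E.Nonempty) {P : MvPolynomial (Fin N) ℂ} {c : ℝ}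
    (h : ∀ z ∈ E, ‖eval z P‖ ≤ c) : supNorm E P ≤ c :=
  have := hne.to_subtype
  ciSup_le fun z => h z z.2

theorem supNorm_nonneg (E : Set (Fin N → ℂ)) (P : MvPolynomial (Fin N) ℂ) : 0 ≤ supNorm E P :=
  Real.iSup_nonneg fun _ => norm_nonneg _

theorem supNorm_zero (E : Set (Fin N → ℂ)) : supNorm E (0 : MvPolynomial (Fin N) ℂ) = 0 := by
  simp only [supNorm, map_zero, norm_zero, Real.iSup_const_zero]

theorem supNorm_pow_le (hE : Bornology.IsBounded E) (hne : E.Nonempty)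
    (P : MvPolynomial (Fin N) ℂ) (k : ℕ) : supNorm E (P ^ k) ≤ supNorm E P ^ k :=
  supNorm_le hne fun z hz => by
    rw [map_pow, norm_pow]
    gcongr
    exact norm_eval_le_supNorm hE P hz

theorem supNorm_sub_C_eval_le (hE : Bornology.IsBounded E) (P : MvPolynomial (Fin N) ℂ)
    (hz : z ∈ E) : supNorm E (P - C (eval z P)) ≤ 2 * supNorm E P :=
  supNorm_le ⟨z, hz⟩ fun y hy => by
    rw [map_sub, eval_C, two_mul]
    exact (norm_sub_le _ _).trans
      (add_le_add (norm_eval_le_supNorm hE P hy) (norm_eval_le_supNorm hE P hz))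

theorem isPolyNorm_supNorm (hE : Bornology.IsBounded E) (hne : E.Nonempty)
    (hdet : ∀ P : MvPolynomial (Fin N) ℂ, supNorm E P = 0 → P = 0) : IsPolyNorm (supNorm E) where
  nonneg := supNorm_nonneg E
  definite := hdet
  triangle P Q := supNorm_le hne fun z hz => by
    rw [map_add]
    exact (norm_add_le _ _).trans
      (add_le_add (norm_eval_le_supNorm hE P hz) (norm_eval_le_supNorm hE Q hz))
  homog c P := by
    simp only [supNorm, smul_eval, norm_mul, Real.mul_iSup_of_nonneg (norm_nonneg c)]

theorem exists_norm_eval_pderiv_pow_le (hE : Bornology.IsBounded E) (hne : E.Nonempty) {j : Fin N}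
    {k : ℕ} (hk : 1 ≤ k) {s : ℝ} (hs : 0 ≤ s)
    (h : HasMarkovBound (supNorm E) (Pi.single j k) s) :
    ∃ M, 0 < M ∧ ∀ z ∈ E, ∀ W : MvPolynomial (Fin N) ℂ, eval z W = 0 →
      ‖eval z (pderiv j W)‖ ^ k ≤ M * posDegree W ^ s * supNorm E W ^ k := by
  obtain ⟨M, hM, h⟩ := h
  refine ⟨M * (k : ℝ) ^ s, by positivity, fun z hz W hW => ?_⟩
  have hfactorial : (1 : ℝ) ≤ ‖(k.factorial : ℂ)‖ := by
    rw [Complex.norm_natCast]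
    exact_mod_cast k.factorial_pos
  have := posDegree_pos (W ^ k)
  have := posDegree_pos W
  calc ‖eval z (pderiv j W)‖ ^ k
      ≤ ‖(k.factorial : ℂ)‖ * ‖eval z (pderiv j W)‖ ^ k :=
        le_mul_of_one_le_left (by positivity) hfactorial
    _ = ‖eval z (mvDeriv (Pi.single j k) (W ^ k))‖ := by
        rw [mvDeriv_single, eval_iterate_pderiv_pow j hW, norm_mul, norm_pow]
    _ ≤ M * posDegree (W ^ k) ^ s * supNorm E (W ^ k) := (norm_eval_le_supNorm hE _ hz).trans (h _)
    _ ≤ M * (k * posDegree W) ^ s * supNorm E W ^ k := by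
        gcongr
        · exact supNorm_nonneg E _
        · exact posDegree_pow_le W hk
        · exact supNorm_pow_le hE hne W k
    _ = M * (k : ℝ) ^ s * posDegree W ^ s * supNorm E W ^ k := by
        rw [Real.mul_rpow k.cast_nonneg (posDegree_pos W).le, ← mul_assoc M]

theorem le_of_pow_le_mul_rpow_mul_pow {x M d B s : ℝ} (hM : 0 ≤ M) (hd : 0 ≤ d)
    (hB : 0 ≤ B) {k : ℕ} (hk : k ≠ 0) (h : x ^ k ≤ M * d ^ s * B ^ k) :
    x ≤ M ^ (k : ℝ)⁻¹ * d ^ (s / k) * B := by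
  refine le_of_pow_le_pow_left₀ hk (by positivity) (h.trans_eq ?_)
  rw [mul_pow, mul_pow, Real.rpow_inv_natCast_pow hM hk, ← Real.rpow_mul_natCast hd,
    div_mul_cancel₀ s (Nat.cast_ne_zero.mpr hk)]

theorem hasMarkovBound_supNorm_single_one (hE : Bornology.IsBounded E) (hne : E.Nonempty)
    {j : Fin N} {k : ℕ} (hk : 1 ≤ k) {s : ℝ} (hs : 0 ≤ s)
    (h : HasMarkovBound (supNorm E) (Pi.single j k) s) :
    HasMarkovBound (supNorm E) (Pi.single j 1) (s / k) := by
  obtain ⟨M, hM, h⟩ := exists_norm_eval_pderiv_pow_le hE hne hk hs h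
  refine ⟨M ^ (k : ℝ)⁻¹ * 2, by positivity, fun P => supNorm_le hne fun z hz => ?_⟩
  set W := P - C (eval z P) with hW
  have hzero : eval z W = 0 := by rw [hW, map_sub, eval_C, sub_self]
  have hpderiv : pderiv j W = pderiv j P := by rw [hW, map_sub, pderiv_C, sub_zero]
  have := posDegree_pos W
  have := posDegree_pos P
  calc ‖eval z (mvDeriv (Pi.single j 1) P)‖ = ‖eval z (pderiv j W)‖ := by
        rw [mvDeriv_single_one, hpderiv]
    _ ≤ M ^ (k : ℝ)⁻¹ * posDegree W ^ (s / k) * supNorm E W :=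
        le_of_pow_le_mul_rpow_mul_pow hM.le (posDegree_pos W).le (supNorm_nonneg E W)
          (Nat.one_le_iff_ne_zero.mp hk) (h z hz W hzero)
    _ ≤ M ^ (k : ℝ)⁻¹ * posDegree P ^ (s / k) * (2 * supNorm E P) := by
        gcongr
        · exact supNorm_nonneg E W
        · exact posDegree_le_posDegree (totalDegree_sub_C_le P _)
        · exact supNorm_sub_C_eval_le hE P hz
    _ = M ^ (k : ℝ)⁻¹ * 2 * posDegree P ^ (s / k) * supNorm E P := by ring

theorem natCast_mul_mExp_supNorm_single_one_le (hE : Bornology.IsBounded E) (hne : E.Nonempty)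
    (j : Fin N) {k : ℕ} (hk : 1 ≤ k) :
    k * mExp (supNorm E) (Pi.single j 1) ≤ mExp (supNorm E) (Pi.single j k) := by
  have hk0 : (0 : ℝ) < k := mod_cast hk
  simp only [mExp_eq_iInf (supNorm_nonneg E) (supNorm_zero E)]
  refine le_iInf₂ fun s ⟨hs, hbound⟩ => ?_
  calc k * (⨅ t, ⨅ _ : 0 < t ∧ HasMarkovBound (supNorm E) (Pi.single j 1) t, ENNReal.ofReal t)
      ≤ k * ENNReal.ofReal (s / k) := by
        gcongr
        exact iInf₂_le (s / k)
          ⟨div_pos hs hk0, hasMarkovBound_supNorm_single_one hE hne hk hs.le hbound⟩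
    _ = ENNReal.ofReal s := by
        rw [← ENNReal.ofReal_natCast k, ← ENNReal.ofReal_mul hk0.le, mul_div_cancel₀ s hk0.ne']

theorem mkExp_supNorm (hE : Bornology.IsBounded E) (hne : E.Nonempty) {k : ℕ} (hk : 1 ≤ k) :
    mkExp (supNorm E) k = k * mkExp (supNorm E) 1 := by
  refine le_antisymm (mkExp_le_natCast_mul (supNorm_nonneg E) (supNorm_zero E) hk) ?_
  rw [mkExp_one, ENNReal.mul_iSup]
  refine iSup_le fun j => (natCast_mul_mExp_supNorm_single_one_le hE hne j hk).trans ?_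
  simpa using mExp_le_mkExp (supNorm E) (Pi.single j k)

end SupNorm

/-! ### The limit -/

theorem tendsto_div_natCast_of_le_add {f : ℕ → ℝ≥0∞} {L c : ℝ≥0∞} (hc : c ≠ ∞)
    (hupper : ∀ᶠ k : ℕ in atTop, f k ≤ k * L + c) (hlower : ∀ᶠ k : ℕ in atTop, k * L ≤ f k + c) :
    Tendsto (fun k : ℕ => f k / k) atTop (nhds L) := by
  have herror : Tendsto (fun k : ℕ => c / k) atTop (nhds 0) := by
    simpa using ENNReal.Tendsto.const_div ENNReal.tendsto_nat_nhds_top (Or.inr hc)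
  have hsub : Tendsto (fun k : ℕ => L - c / k) atTop (nhds L) := by
    simpa using ENNReal.Tendsto.sub tendsto_const_nhds herror (Or.inr ENNReal.zero_ne_top)
  have hadd : Tendsto (fun k : ℕ => L + c / k) atTop (nhds L) := by
    simpa using tendsto_const_nhds.add herror
  have hcancel {k : ℕ} (hk : 0 < k) : k * L / k = L := by
    rw [mul_comm, ENNReal.mul_div_cancel_right (Nat.cast_ne_zero.mpr hk.ne')
      (ENNReal.natCast_ne_top k)]
  refine tendsto_of_tendsto_of_tendsto_of_le_of_le' hsub hadd ?_ ?_
  · filter_upwards [hlower, eventually_gt_atTop 0] with k hle hk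
    rw [tsub_le_iff_right, ← ENNReal.add_div]
    exact (hcancel hk).ge.trans (ENNReal.div_le_div_right hle _)
  · filter_upwards [hupper, eventually_gt_atTop 0] with k hle hk
    refine (ENNReal.div_le_div_right hle _).trans_eq ?_
    rw [ENNReal.add_div, hcancel hk]

theorem IsPolyNorm.degreeDominated {N : ℕ} {q r : MvPolynomial (Fin N) ℂ → ℝ}
    (hq : IsPolyNorm q) (hr : IsPolyNorm r) {A s : ℝ} (hA : 0 < A)
    (h : ∀ P : MvPolynomial (Fin N) ℂ, 1 ≤ P.totalDegree →
      q P ≤ A * (P.totalDegree : ℝ) ^ s * r P) : DegreeDominated s q r := by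
  have hr1 : r 1 ≠ 0 := fun h1 => one_ne_zero (hr.definite 1 h1)
  refine (degreeDominated_iff (K := q 1 / r 1) hr.nonneg fun c => ?_).mpr ⟨A, hA, h⟩
  rw [C_eq_smul_one, hq.homog, hr.homog, mul_left_comm, div_mul_cancel₀ _ hr1]

theorem statement1_general {N : ℕ} {E : Set (Fin N → ℂ)} (hE : Bornology.IsBounded E)
    (hne : E.Nonempty) {q : MvPolynomial (Fin N) ℂ → ℝ} {a b : ℝ} (ha : 0 ≤ a) (hb : 0 ≤ b)
    (hup : DegreeDominated a (supNorm E) q) (hdown : DegreeDominated b q (supNorm E)) :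
    Tendsto (fun k : ℕ => mkExp q k / (k : ℝ≥0∞)) atTop (nhds (mkExp (supNorm E) 1)) ∧
      mStar q = mkExp (supNorm E) 1 ∧ mkExp (supNorm E) 1 ≤ mkExp q 1 := by
  have hE0 := supNorm_nonneg E
  have hq := hup.nonneg hE0
  have hq0 : q 0 = 0 := hdown.eq_zero hq (supNorm_zero E)
  have hupper := mkExp_le_mkExp_add hE0 (supNorm_zero E) ha hb hup hdown
  have hlower := mkExp_le_mkExp_add hq hq0 hb ha hdown hup
  have hlim : Tendsto (fun k : ℕ => mkExp q k / (k : ℝ≥0∞)) atTop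
      (nhds (mkExp (supNorm E) 1)) := by
    refine tendsto_div_natCast_of_le_add (c := ENNReal.ofReal (a + b)) ENNReal.ofReal_ne_top ?_ ?_
    · filter_upwards [eventually_ge_atTop 1] with k hk
      exact mkExp_supNorm hE hne hk ▸ hupper k
    · filter_upwards [eventually_ge_atTop 1] with k hk
      exact mkExp_supNorm hE hne hk ▸ add_comm b a ▸ hlower k
  refine ⟨hlim, hlim.limsup_eq, le_of_tendsto hlim ?_⟩
  filter_upwards [eventually_ge_atTop 1] with k hk
  exact ENNReal.div_le_of_le_mul' (mkExp_le_natCast_mul hq hq0 hk)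

/-- If `E ⊂ ℂ^N` is a nonempty compact determining set and `q` is an
`E`-admissible norm on `ℙ(ℂ^N)`, then `lim_{k→∞} m_k(q)/k` exists and equals `m(E)`;
in particular `m*(q) = m(E)` and `m(E) ≤ m(q)`. -/
theorem statement1 {N : ℕ} (E : Set (Fin N → ℂ)) (hE : IsCompact E) (hne : E.Nonempty)
    (hdet : ∀ P : MvPolynomial (Fin N) ℂ, supNorm E P = 0 → P = 0)
    (q : MvPolynomial (Fin N) ℂ → ℝ) (hq : IsPolyNorm q)
    (A B a b : ℝ) (hA : 0 < A) (hB : 0 < B) (ha : 0 ≤ a) (hb : 0 ≤ b)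
    (hup : ∀ P : MvPolynomial (Fin N) ℂ, 1 ≤ P.totalDegree →
      supNorm E P ≤ A * (P.totalDegree : ℝ) ^ a * q P)
    (hdown : ∀ P : MvPolynomial (Fin N) ℂ, 1 ≤ P.totalDegree →
      q P ≤ B * (P.totalDegree : ℝ) ^ b * supNorm E P) :
    Tendsto (fun k : ℕ => mkExp q k / (k : ℝ≥0∞)) atTop (nhds (mkExp (supNorm E) 1)) ∧
      mStar q = mkExp (supNorm E) 1 ∧ mkExp (supNorm E) 1 ≤ mkExp q 1 := by
  have hE' := isPolyNorm_supNorm hE.isBounded hne hdet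
  exact statement1_general hE.isBounded hne ha hb (hE'.degreeDominated hq hA hup)
    (hq.degreeDominated hE' hB hdown)
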